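/- arXiv:math-ph/0008007 — 2 statements merged into one kernel-verified Lean document; each statement's English description precedes it below -/
import Mathlib

section
/- The linear map a² : V → V is locally nilpotent (for each v ∈ V there is N with (a²)^N v = 0), so E := Σ_{k=0}^∞ (1/(4^k · k!)) · (a²)^k is a well-defined linear endomorphism of V (on each vector only finitely many terms are nonzero). This map satisfies E ∘ a† = (a† + (1/2)·a) ∘ E and E ∘ a = a ∘ E. -/
open Complex MvPolynomial Finset

noncomputable section

/-- The standard basis vector `e n` of `V = ℕ →₀ ℂ`. -/
def e (n : ℕ) : ℕ →₀ ℂ := Finsupp.single n 1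

/-- The destruction operator `a`: `a (e 0) = 0`, `a (e (n+1)) = √(n+1) • e n`. -/
def aop : (ℕ →₀ ℂ) →ₗ[ℂ] (ℕ →₀ ℂ) :=
  Finsupp.lsum ℂ fun n => match n with
    | 0 => 0
    | k + 1 => ((Real.sqrt (k + 1) : ℝ) : ℂ) • Finsupp.lsingle k

/-- The creation operator `a†`: `a† (e n) = √(n+1) • e (n+1)`. -/
def adop : (ℕ →₀ ℂ) →ₗ[ℂ] (ℕ →₀ ℂ) :=
  Finsupp.lsum ℂ fun n => ((Real.sqrt (n + 1) : ℝ) : ℂ) • Finsupp.lsingle (n + 1)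

abbrev AA : Module.End ℂ (ℕ →₀ ℂ) := (aop : Module.End ℂ (ℕ →₀ ℂ)) ^ 2

def cc (k : ℕ) : ℂ := (1 : ℂ) / (4 ^ k * (k.factorial : ℂ))

def TT (N : ℕ) : Module.End ℂ (ℕ →₀ ℂ) := ∑ k ∈ Finset.range N, cc k • AA ^ k

lemma aop_zero (c : ℂ) : aop (Finsupp.single 0 c) = 0 := by
  simp [aop]

lemma aop_succ (n : ℕ) (c : ℂ) : aop (Finsupp.single (n+1) c) =
    ((Real.sqrt (n + 1) : ℝ) : ℂ) • Finsupp.single n c := by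
  simp [aop]

lemma adop_single (n : ℕ) (c : ℂ) : adop (Finsupp.single n c) =
    ((Real.sqrt (n + 1) : ℝ) : ℂ) • Finsupp.single (n + 1) c := by
  simp [adop]

lemma sqrt_sq_c (n : ℕ) : ((Real.sqrt (n + 1) : ℝ) : ℂ) * ((Real.sqrt (n + 1) : ℝ) : ℂ) = n + 1 := by
  rw [← Complex.ofReal_mul, Real.mul_self_sqrt (by positivity)]
  push_cast
  rfl

lemma ccr : (aop : Module.End ℂ (ℕ →₀ ℂ)) * adop = (adop : Module.End ℂ (ℕ →₀ ℂ)) * aop + 1 := by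
  apply Finsupp.lhom_ext
  intro n c
  rw [LinearMap.add_apply, Module.End.mul_apply, Module.End.mul_apply, Module.End.one_apply,
    adop_single, map_smul, aop_succ, smul_smul, sqrt_sq_c]
  cases n with
  | zero => rw [aop_zero]; simp
  | succ m =>
    rw [aop_succ, map_smul, adop_single, smul_smul, sqrt_sq_c]
    push_cast
    rw [add_smul _ (1 : ℂ), one_smul]

lemma AA_ad (k : ℕ) : AA ^ (k+1) * (adop : Module.End ℂ (ℕ →₀ ℂ)) =
    (adop : Module.End ℂ (ℕ →₀ ℂ)) * AA ^ (k+1) +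
      (2 * (k + 1) : ℂ) • ((aop : Module.End ℂ (ℕ →₀ ℂ)) * AA ^ k) := by
  have h1 : AA * (adop : Module.End ℂ (ℕ →₀ ℂ)) = (adop : Module.End ℂ (ℕ →₀ ℂ)) * AA +
      (2 : ℂ) • (aop : Module.End ℂ (ℕ →₀ ℂ)) := by
    rw [AA, sq, mul_assoc, ccr, mul_add, ← mul_assoc, ccr, add_mul, two_smul]
    simp only [mul_one, one_mul, mul_assoc, add_assoc]
  induction k with
  | zero => simpa using h1
  | succ k ih =>
    have hc : AA * (aop : Module.End ℂ (ℕ →₀ ℂ)) = aop * AA := by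
      rw [AA, sq, mul_assoc]
    rw [pow_succ' _ (k+1), mul_assoc, ih, mul_add, ← mul_assoc, h1, add_mul, mul_smul_comm,
      ← mul_assoc AA, hc, mul_assoc _ AA (AA ^ k), ← pow_succ', smul_mul_assoc, add_assoc,
      ← add_smul, mul_assoc]
    congr 2
    push_cast
    ring

lemma cc_succ (k : ℕ) : cc (k+1) * (2 * (k + 1)) = (1/2) * cc k := by
  have h1 : (k.factorial : ℂ) ≠ 0 := by exact_mod_cast k.factorial_ne_zero
  have h2 : (k + 1 : ℂ) ≠ 0 := by exact_mod_cast k.succ_ne_zero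
  simp only [cc, Nat.factorial_succ]
  push_cast
  field_simp
  ring

lemma TT_ad (N : ℕ) : TT (N+1) * (adop : Module.End ℂ (ℕ →₀ ℂ)) =
    (adop : Module.End ℂ (ℕ →₀ ℂ)) * TT (N+1) +
      (1 / 2 : ℂ) • ((aop : Module.End ℂ (ℕ →₀ ℂ)) * TT N) := by
  induction N with
  | zero => simp [TT]
  | succ N ih =>
    have e1 : TT (N+1+1) = TT (N+1) + cc (N+1) • AA ^ (N+1) := Finset.sum_range_succ _ _
    have e2 : TT (N+1) = TT N + cc N • AA ^ N := Finset.sum_range_succ _ _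
    rw [e1, add_mul, ih, smul_mul_assoc, AA_ad, smul_add, smul_smul, cc_succ, mul_add,
      mul_smul_comm]
    have e3 : (1 / 2 : ℂ) • ((aop : Module.End ℂ (ℕ →₀ ℂ)) * TT (N+1)) =
        (1 / 2 : ℂ) • ((aop : Module.End ℂ (ℕ →₀ ℂ)) * TT N) +
        (1 / 2 * cc N) • ((aop : Module.End ℂ (ℕ →₀ ℂ)) * AA ^ N) := by
      rw [e2, mul_add, smul_add, mul_smul_comm, smul_smul]
    rw [e3]
    abel

lemma TT_a (N : ℕ) : TT N * (aop : Module.End ℂ (ℕ →₀ ℂ)) = aop * TT N := by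
  have : Commute (TT N) (aop : Module.End ℂ (ℕ →₀ ℂ)) := by
    apply Commute.sum_left
    intro k _
    exact (((Commute.refl aop).pow_left 2).pow_left k).smul_left _
  exact this

lemma AA_mono {v : ℕ →₀ ℂ} {N M : ℕ} (h : N ≤ M) (hv : (AA ^ N) v = 0) : (AA ^ M) v = 0 := by
  obtain ⟨d, rfl⟩ := Nat.exists_eq_add_of_le' h
  rw [pow_add, Module.End.mul_apply, hv, map_zero]

lemma TT_apply (N : ℕ) (v : ℕ →₀ ℂ) : TT N v = ∑ k ∈ Finset.range N, cc k • (AA ^ k) v := by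
  simp [TT, LinearMap.sum_apply]

lemma TT_stab {v : ℕ →₀ ℂ} {N M : ℕ} (h : N ≤ M) (hv : (AA ^ N) v = 0) : TT M v = TT N v := by
  rw [TT_apply, TT_apply]
  symm
  apply Finset.sum_subset (Finset.range_mono h)
  intro k _ hk
  rw [AA_mono (by simpa using hk) hv, smul_zero]

lemma a_nil (n : ℕ) : ∀ c : ℂ, ((aop : Module.End ℂ (ℕ →₀ ℂ)) ^ (n+1)) (Finsupp.single n c) = 0 := by
  induction n with
  | zero => intro c; simpa using aop_zero c
  | succ n ih =>
    intro c
    rw [pow_succ, Module.End.mul_apply, aop_succ, map_smul, ih, smul_zero]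

lemma AA_nil (v : ℕ →₀ ℂ) : ∃ N : ℕ, (AA ^ N) v = 0 := by
  induction v using Finsupp.induction_linear with
  | zero => exact ⟨0, by simp⟩
  | add f g hf hg =>
    obtain ⟨N, hN⟩ := hf
    obtain ⟨M, hM⟩ := hg
    refine ⟨max N M, ?_⟩
    rw [map_add, AA_mono (le_max_left _ _) hN, AA_mono (le_max_right _ _) hM, add_zero]
  | single n c =>
    refine ⟨n+1, ?_⟩
    rw [AA, ← pow_mul, two_mul, pow_add, Module.End.mul_apply, a_nil, map_zero]

def NN (v : ℕ →₀ ℂ) : ℕ := (AA_nil v).choose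

lemma NN_spec (v : ℕ →₀ ℂ) : (AA ^ (NN v)) v = 0 := (AA_nil v).choose_spec

lemma TT_NN {v : ℕ →₀ ℂ} {N : ℕ} (hv : (AA ^ N) v = 0) : TT (NN v) v = TT N v := by
  rcases le_total N (NN v) with h | h
  · exact TT_stab h hv
  · exact (TT_stab h (NN_spec v)).symm

def EE : Module.End ℂ (ℕ →₀ ℂ) where
  toFun v := TT (NN v) v
  map_add' v w := by
    have h1 := AA_mono (le_max_left (NN v) (NN w)) (NN_spec v)
    have h2 := AA_mono (le_max_right (NN v) (NN w)) (NN_spec w)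
    rw [TT_NN h1, TT_NN h2, ← map_add]
    apply TT_NN
    rw [map_add, h1, h2, add_zero]
  map_smul' c v := by
    rw [RingHom.id_apply, ← map_smul]
    apply TT_NN
    rw [map_smul, NN_spec, smul_zero]

lemma EE_eq {v : ℕ →₀ ℂ} {N : ℕ} (hv : (AA ^ N) v = 0) : EE v = TT N v := TT_NN hv

/-- `a²` is locally nilpotent, so `E = Σ_k (1/(4^k k!)) (a²)^k` is a well-defined
endomorphism of `V` (on each vector the series terminates), and `E ∘ a† = (a† + ½a) ∘ E`,
`E ∘ a = a ∘ E`. -/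
theorem stmt7 :
    (∀ v : ℕ →₀ ℂ, ∃ N : ℕ, (((aop : Module.End ℂ (ℕ →₀ ℂ)) ^ 2) ^ N) v = 0) ∧
    ∃ E : Module.End ℂ (ℕ →₀ ℂ),
      (∀ (v : ℕ →₀ ℂ) (N : ℕ), (((aop : Module.End ℂ (ℕ →₀ ℂ)) ^ 2) ^ N) v = 0 →
        E v = ∑ k ∈ Finset.range N,
          ((1 : ℂ) / (4 ^ k * (k.factorial : ℂ))) •
            ((((aop : Module.End ℂ (ℕ →₀ ℂ)) ^ 2) ^ k) v)) ∧
      E * (adop : Module.End ℂ (ℕ →₀ ℂ)) =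
        ((adop : Module.End ℂ (ℕ →₀ ℂ)) + (1 / 2 : ℂ) • (aop : Module.End ℂ (ℕ →₀ ℂ))) * E ∧
      E * (aop : Module.End ℂ (ℕ →₀ ℂ)) = (aop : Module.End ℂ (ℕ →₀ ℂ)) * E := by
  refine ⟨AA_nil, EE, ?_, ?_, ?_⟩
  · intro v N hv
    rw [EE_eq hv, TT_apply]
    rfl
  · refine LinearMap.ext fun v => ?_
    have hv := NN_spec v
    have hv1 := AA_mono (Nat.le_succ _) hv
    have h1 : (AA ^ (NN v + 1)) (adop v) = 0 := by
      have := LinearMap.congr_fun (AA_ad (NN v)) v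
      simp only [LinearMap.add_apply, Module.End.mul_apply, LinearMap.smul_apply] at this
      rw [this, hv, hv1]
      simp
    have h2 := LinearMap.congr_fun (TT_ad (NN v)) v
    simp only [LinearMap.add_apply, Module.End.mul_apply, LinearMap.smul_apply] at h2 ⊢
    rw [EE_eq h1, h2, EE_eq hv, TT_stab (Nat.le_succ _) hv]
  · refine LinearMap.ext fun v => ?_
    have hv := NN_spec v
    have h1 : (AA ^ (NN v)) (aop v) = 0 := by
      have hc : Commute (AA ^ (NN v)) (aop : Module.End ℂ (ℕ →₀ ℂ)) :=
        ((Commute.refl aop).pow_left 2).pow_left _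
      have := LinearMap.congr_fun hc.eq v
      simp only [Module.End.mul_apply] at this
      rw [this, hv, map_zero]
    have h2 := LinearMap.congr_fun (TT_a (NN v)) v
    simp only [Module.End.mul_apply] at h2 ⊢
    rw [EE_eq h1, h2, EE_eq hv]

end
end

section
/- Define the linear map Φ_ast : ℂ[x,p] → End_ℂ(V) on the monomial basis by Φ_ast(p^m x^n) = F^{(m,n)}, and define the anti-standard star product on ℂ[x,p] by A ⋆_ast B = Σ_{k=0}^∞ ((iħ)^k/k!) · (∂_x^k A)·(∂_p^k B) (a finite sum for polynomials). Then for all polynomials A, B ∈ ℂ[x,p]: Φ_ast(A ⋆_ast B) = Φ_ast(A) ∘ Φ_ast(B). -/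
open Complex MvPolynomial Finset

noncomputable section

/-- `F^{(m,n)} = (−iℏ·a)^m ∘ (a†)^n` as an element of `End_ℂ(V)`. -/
def F (ℏ : ℝ) (m n : ℕ) : Module.End ℂ (ℕ →₀ ℂ) :=
  ((-(Complex.I * ℏ)) • (aop : Module.End ℂ (ℕ →₀ ℂ))) ^ m * (adop : Module.End ℂ (ℕ →₀ ℂ)) ^ n

/-- The polynomial algebra ℂ[x,p] in two commuting variables. -/
abbrev Pxp := MvPolynomial (Fin 2) ℂ

/-- The variable `x`. -/
def xv : Pxp := X 0
/-- The variable `p`. -/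
def pv : Pxp := X 1

/-- The partial derivative `∂_x` as a linear endomorphism. -/
def Dx : Module.End ℂ Pxp := (pderiv (0 : Fin 2)).toLinearMap
/-- The partial derivative `∂_p` as a linear endomorphism. -/
def Dp : Module.End ℂ Pxp := (pderiv (1 : Fin 2)).toLinearMap

/-- The anti-standard star product `A ⋆_ast B = Σ_k ((iℏ)^k/k!) (∂_x^k A)(∂_p^k B)`
(a finite sum for polynomials). -/
def astStar (ℏ : ℝ) (A B : Pxp) : Pxp :=
  ∑ k ∈ Finset.range (A.totalDegree + 1),
    ((Complex.I * ℏ) ^ k / (k.factorial : ℂ)) • (((Dx ^ k) A) * ((Dp ^ k) B))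

lemma comm_aux : (aop : Module.End ℂ (ℕ →₀ ℂ)) * adop = adop * aop + 1 := by
  refine Finsupp.lhom_ext' fun n => LinearMap.ext_ring ?_
  have h : ∀ k : ℕ, ((Real.sqrt (k + 1) : ℝ) : ℂ) * ((Real.sqrt (k + 1) : ℝ) : ℂ) = k + 1 := by
    intro k
    rw [← Complex.ofReal_mul, Real.mul_self_sqrt (by positivity)]
    push_cast; rfl
  cases n with
  | zero =>
    simp [aop, adop]
  | succ n =>
    have h1 := h n
    have h2 := h (n + 1)
    simp only [LinearMap.comp_apply, Module.End.mul_apply, LinearMap.add_apply, aop, adop,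
      Finsupp.lsingle_apply, Finsupp.lsum_single, LinearMap.smul_apply, map_smul,
      Module.End.one_apply, Finsupp.smul_single, smul_eq_mul, mul_one, ← Finsupp.single_add]
    push_cast at h1 h2 ⊢
    rw [h1, h2]

lemma Dx_vanish (N : ℕ) : ∀ A : Pxp, (∀ s, N ≤ s 0 → coeff s A = 0) → (Dx ^ N) A = 0 := by
  induction N with
  | zero =>
    intro A h
    ext s
    simpa using h s (Nat.zero_le _)
  | succ N ih =>
    intro A h
    rw [pow_succ, Module.End.mul_apply]
    apply ih
    intro s hs
    change coeff s (pderiv 0 A) = 0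
    rw [coeff_pderiv, h _ (by simpa using hs), zero_mul]

lemma Dx_vanish' (A : Pxp) (k : ℕ) (hk : A.totalDegree < k) : (Dx ^ k) A = 0 := by
  apply Dx_vanish
  intro s hs
  by_contra hne
  have h1 := le_totalDegree (mem_support_iff.2 hne)
  rw [Finsupp.sum_fintype _ _ (by simp), Fin.sum_univ_two] at h1
  omega

def T (c : ℂ) (N : ℕ) (A B : Pxp) : Pxp :=
  ∑ k ∈ Finset.range N, (c ^ k / (k.factorial : ℂ)) • (((Dx ^ k) A) * ((Dp ^ k) B))

lemma T_stable (c : ℂ) (A B : Pxp) (N : ℕ) (h : A.totalDegree + 1 ≤ N) :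
    T c N A B = T c (A.totalDegree + 1) A B := by
  symm
  apply Finset.sum_subset (Finset.range_mono h)
  intro k _ hk
  rw [Dx_vanish' A k (by simpa using hk)]
  simp

lemma pow_D_X (D : Derivation ℂ Pxp Pxp) (y : Pxp) (hy : D y = 1) (k : ℕ) (A : Pxp) :
    (D.toLinearMap ^ (k+1)) (y * A) =
      y * (D.toLinearMap ^ (k+1)) A + ((k : ℂ) + 1) • (D.toLinearMap ^ k) A := by
  induction k with
  | zero => simp [hy]
  | succ k ih =>
    rw [pow_succ', Module.End.mul_apply, ih, map_add, map_smul,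
      ← Module.End.mul_apply, ← pow_succ', Module.End.mul_apply]
    change D (y * _) + _ = y * D _ + _
    rw [Derivation.leibniz, hy]
    simp only [smul_eq_mul, mul_one]
    push_cast
    module

lemma pow_D_Y (D : Derivation ℂ Pxp Pxp) (y : Pxp) (hy : D y = 0) (k : ℕ) (A : Pxp) :
    (D.toLinearMap ^ k) (y * A) = y * (D.toLinearMap ^ k) A := by
  induction k with
  | zero => simp
  | succ k ih =>
    rw [pow_succ', Module.End.mul_apply, ih, Module.End.mul_apply]
    change D (y * _) = y * D _
    rw [Derivation.leibniz, hy]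
    simp

lemma Dx_p (k : ℕ) (A : Pxp) : (Dx ^ k) (pv * A) = pv * (Dx ^ k) A :=
  pow_D_Y _ _ (by simp [pv, pderiv_X_of_ne]) _ _
lemma Dp_x (k : ℕ) (A : Pxp) : (Dp ^ k) (xv * A) = xv * (Dp ^ k) A :=
  pow_D_Y _ _ (by simp [xv, pderiv_X_of_ne]) _ _
lemma Dx_x (k : ℕ) (A : Pxp) : (Dx ^ (k+1)) (xv * A) =
    xv * (Dx ^ (k+1)) A + ((k : ℂ) + 1) • (Dx ^ k) A :=
  pow_D_X _ _ (by simp [xv]) _ _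

lemma T_p (c : ℂ) (N : ℕ) (A B : Pxp) : T c N (pv * A) B = pv * T c N A B := by
  simp only [T, Dx_p, Finset.mul_sum, mul_smul_comm, mul_assoc]

lemma T_x_right (c : ℂ) (N : ℕ) (A B : Pxp) : T c N A (xv * B) = xv * T c N A B := by
  simp only [T, Dp_x, Finset.mul_sum, mul_smul_comm, mul_left_comm]

lemma T_add_right (c : ℂ) (N : ℕ) (A B C : Pxp) : T c N A (B + C) = T c N A B + T c N A C := by
  simp only [T, map_add, mul_add, smul_add, Finset.sum_add_distrib]

lemma T_add_left (c : ℂ) (N : ℕ) (A B C : Pxp) : T c N (A + B) C = T c N A C + T c N B C := by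
  simp only [T, map_add, add_mul, smul_add, Finset.sum_add_distrib]

lemma T_x (c : ℂ) (N : ℕ) (A B : Pxp) :
    T c (N+1) (xv * A) B = xv * T c (N+1) A B + c • T c N A (Dp B) := by
  unfold T
  rw [Finset.sum_range_succ', Finset.sum_range_succ', mul_add, add_right_comm, Finset.mul_sum,
    Finset.smul_sum, ← Finset.sum_add_distrib]
  congr 1
  · apply Finset.sum_congr rfl
    intro k _
    rw [Dx_x, ← Module.End.mul_apply (Dp ^ k), ← pow_succ, add_mul, smul_add, mul_smul_comm,
      mul_assoc, smul_mul_assoc, smul_smul, smul_smul]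
    congr 2
    have h1 : (k.factorial : ℂ) ≠ 0 := by exact_mod_cast k.factorial_ne_zero
    have h2 : (k : ℂ) + 1 ≠ 0 := by exact_mod_cast k.succ_ne_zero
    rw [Nat.factorial_succ]
    push_cast
    field_simp
    ring
  · simp [mul_assoc]

lemma span_ind {M : Type*} [AddCommMonoid M] [Module ℂ M] (f g : Pxp →ₗ[ℂ] M)
    (h : ∀ m n : ℕ, f (pv ^ m * xv ^ n) = g (pv ^ m * xv ^ n)) : f = g := by
  refine MvPolynomial.linearMap_ext fun s => LinearMap.ext_ring ?_
  have : monomial s (1:ℂ) = pv ^ (s 1) * xv ^ (s 0) := by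
    rw [monomial_eq, Finsupp.prod_fintype _ _ (by simp), Fin.prod_univ_two]
    simp [pv, xv, mul_comm]
  simp only [LinearMap.comp_apply, this, h]

lemma comm_pow {R : Type*} [Ring R] [Algebra ℂ R] (P Q : R) (c : ℂ) (h : Q * P = P * Q + c • 1)
    (r : ℕ) : Q * P ^ r = P ^ r * Q + (c * r) • P ^ (r - 1) := by
  induction r with
  | zero => simp
  | succ r ih =>
    rw [pow_succ, ← mul_assoc, ih, add_mul, mul_assoc, h, mul_add, smul_mul_assoc]
    cases r with
    | zero => simp
    | succ r =>
      simp only [Nat.add_sub_cancel, ← pow_succ, mul_smul_comm, mul_one, ← mul_assoc]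
      push_cast
      module

/-- the anti-standard ordering map `Φ_ast(p^m x^n) = F^{(m,n)}` is a
homomorphism for the anti-standard star product: `Φ_ast(A ⋆_ast B) = Φ_ast(A) ∘ Φ_ast(B)`. -/
theorem stmt15 (ℏ : ℝ) (hℏ : ℏ ≠ 0)
    (Φ : Pxp →ₗ[ℂ] Module.End ℂ (ℕ →₀ ℂ))
    (hΦ : ∀ m n : ℕ, Φ (pv ^ m * xv ^ n) = F ℏ m n) :
    ∀ A B : Pxp, Φ (astStar ℏ A B) = Φ A * Φ B := by
  set c : ℂ := Complex.I * ℏ with hc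
  set P : Module.End ℂ (ℕ →₀ ℂ) := (-c) • aop with hP
  set Q : Module.End ℂ (ℕ →₀ ℂ) := adop with hQ
  have hΦ' : ∀ m n : ℕ, Φ (pv ^ m * xv ^ n) = P ^ m * Q ^ n := hΦ
  have hcomm : Q * P = P * Q + c • 1 := by
    rw [hP, smul_mul_assoc, comm_aux, mul_smul_comm]
    module
  have h1 : ∀ C, Φ (pv * C) = P * Φ C := by
    intro C
    refine LinearMap.congr_fun (f := (Φ ∘ₗ LinearMap.mulLeft ℂ pv)) (g := (LinearMap.mulLeft ℂ P ∘ₗ Φ)) (span_ind _ _ ?_) C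
    intro m n
    simp only [LinearMap.comp_apply, LinearMap.mulLeft_apply]
    rw [← mul_assoc, ← pow_succ', hΦ', hΦ', ← mul_assoc, ← pow_succ']
  have h2 : ∀ C, Φ (xv * C) = Φ C * Q := by
    intro C
    refine LinearMap.congr_fun (f := (Φ ∘ₗ LinearMap.mulLeft ℂ xv)) (g := (LinearMap.mulRight ℂ Q ∘ₗ Φ)) (span_ind _ _ ?_) C
    intro m n
    simp only [LinearMap.comp_apply, LinearMap.mulLeft_apply, LinearMap.mulRight_apply]
    rw [mul_left_comm, ← pow_succ', hΦ', hΦ', mul_assoc, ← pow_succ]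
  have h3 : ∀ C, Φ (xv * C + c • Dp C) = Q * Φ C := by
    intro C
    refine LinearMap.congr_fun (f := (Φ ∘ₗ (LinearMap.mulLeft ℂ xv + c • Dp))) (g := (LinearMap.mulLeft ℂ Q ∘ₗ Φ)) (span_ind _ _ ?_) C
    intro m n
    have hD : Dp (pv ^ m * xv ^ n) = (m : ℂ) • (pv ^ (m - 1) * xv ^ n) := by
      change pderiv 1 _ = _
      have e1 : pderiv (1 : Fin 2) pv = 1 := by simp [pv]
      have e2 : pderiv (1 : Fin 2) xv = 0 := by simp [xv, pderiv_X_of_ne]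
      rw [pderiv_mul, pderiv_pow, pderiv_pow, e1, e2, Nat.cast_smul_eq_nsmul, nsmul_eq_mul]
      ring
    simp only [LinearMap.comp_apply, LinearMap.mulLeft_apply, LinearMap.add_apply,
      LinearMap.smul_apply, map_add, map_smul, hD, h2, hΦ']
    rw [← mul_assoc, comm_pow P Q c hcomm, add_mul, mul_assoc, mul_assoc, ← pow_succ, ← pow_succ',
      smul_mul_assoc, smul_smul]
  have key : ∀ A : Pxp, ∃ N0, ∀ N ≥ N0, ∀ B, Φ (T c N A B) = Φ A * Φ B := by
    intro A
    induction A using MvPolynomial.induction_on with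
    | C z =>
      refine ⟨1, fun N hN B => ?_⟩
      have hz : Φ (C z) = z • 1 := by
        have := hΦ' 0 0
        rw [← mul_one (C z), ← smul_eq_C_mul, map_smul]
        simp at this
        rw [this]
      rw [T_stable _ _ _ _ (by simpa using hN), hz]
      simp [T, ← smul_eq_C_mul]
    | add A A' hA hA' =>
      obtain ⟨N1, hA⟩ := hA
      obtain ⟨N2, hA'⟩ := hA'
      refine ⟨max N1 N2, fun N hN B => ?_⟩
      rw [T_add_left, map_add, hA N (le_trans (le_max_left _ _) hN),
        hA' N (le_trans (le_max_right _ _) hN), map_add, add_mul]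
    | mul_X A i hA =>
      obtain ⟨N1, hA⟩ := hA
      refine ⟨max N1 (A.totalDegree + 1) + 1, fun N hN B => ?_⟩
      obtain ⟨N, rfl⟩ : ∃ M, N = M + 1 := ⟨N - 1, by omega⟩
      rw [mul_comm]
      fin_cases i
      · change Φ (T c (N + 1) (xv * A) B) = Φ (xv * A) * _
        have e1 : T c N A (Dp B) = T c (N + 1) A (Dp B) := by
          rw [T_stable _ _ _ N (by omega), T_stable _ _ _ (N+1) (by omega)]
        have e2 : ∀ M C, T c M A (c • C) = c • T c M A C := by
          intro M C
          simp only [T, map_smul, mul_smul_comm, Finset.smul_sum]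
          exact Finset.sum_congr rfl fun _ _ => smul_comm _ _ _
        rw [T_x, e1, ← T_x_right, ← e2, ← T_add_right, hA _ (by omega), h3, h2, mul_assoc]
      · change Φ (T c (N + 1) (pv * A) B) = Φ (pv * A) * _
        rw [T_p, h1, h1, hA _ (by omega), mul_assoc]
  intro A B
  obtain ⟨N0, h⟩ := key A
  rw [← h (max N0 (A.totalDegree + 1)) (le_max_left _ _) B, T_stable _ _ _ _ (le_max_right _ _)]
  rfl

end
end
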